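/- Let θ be a flow for (A,F), ℛ the resolvent of A and m̃ the associated frozen shift. Then there exist a constant C = C(T) > 0 and an exponent ζ ∈ (0,1) such that for all 0 ≤ t < s ≤ T and all x, y ∈ ℝ^N: |𝕋_{s−t}^{-1}( θ_{s,t}(x) − m̃^{s,y}_{s,t}(x) )| ≤ C (s−t)^{min(1/α, ζ)} ( 1 + |𝕋_{s−t}^{-1}( θ_{s,t}(x) − y )| ), where θ_{s,t}(x) is the forward flow started from x at time t and the shift m̃^{s,y}_{s,t}(x) = ℛ_{s,t}x + ∫_t^s ℛ_{s,u} F(u, θ_{u,s}(y)) du is linearized along the backward flow with terminal value y at time s. -/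

import Mathlib

/-!
Write `h = s - t`, `X_u = θ_{u,t}(x)`, `Y_u = θ_{u,s}(y)` and measure everything in the
intrinsic norm `|𝕋_h⁻¹ ·|`. In that norm the drift is well behaved on a time interval of length
`h`:

* `|𝕋_h⁻¹ A z| ≤ C h⁻¹ |𝕋_h⁻¹ z|`, because `A` has only one sub-diagonal (`scaled_linear`);
* `|𝕋_h⁻¹ (F(u,x) - F(u,y))| ≤ C h^{ζ-1} (1 + |𝕋_h⁻¹ (x-y)|)` for some `ζ > 0`
  (`ChainHyp.exists_scaled`). This is where the thresholds on the Hölder exponents enter, through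
  `1 - (1/α + i) + β_j (1/α + j) > 0` (blocks numbered from `0`) and `r^β ≤ 1 + r`. The additive
  constant `1` makes it unnecessary to regularise `F`.

Backward Gronwall from time `s` applied to `X - Y` gives
`|𝕋_h⁻¹ (X_u - Y_u)| ≤ C (1 + |𝕋_h⁻¹ (X_s - y)|)` for all `u ∈ [t,s]`. By variation of constants
the frozen shift solves `m' = A m + F(u, Y_u)`, so `w = X - m` solves
`w' = A w + F(u, X_u) - F(u, Y_u)` with `w_t = 0`, and forward Gronwall yields
`|𝕋_h⁻¹ w_s| ≤ C h^ζ (1 + |𝕋_h⁻¹ (X_s - y)|)`. Since `ζ < 1/2 < 1/α`, the exponent is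
`min (1/α) ζ`.

Two measure-theoretic points need care. The integral equations defining the flow and the resolvent
do not include integrability of their integrands; it follows from linear growth and Gronwall
(`integrable_two_sided`). And variation of constants rests on Fubini, hence on the joint
measurability of `R`, which is obtained from its Lipschitz dependence on both times.
-/

open MeasureTheory Real Set

noncomputable section

/-- The product state space `ℝ^N = ℝ^{d 0} × ⋯ × ℝ^{d (n-1)}`,
the `i`-th block having dimension `d i`. -/
abbrev E (n : ℕ) (d : Fin n → ℕ) : Type := ∀ i : Fin n, Fin (d i) → ℝ

/-- The action of the inverse intrinsic scale matrix `𝕋_h⁻¹ = h^{-1/α} 𝕄_h⁻¹`: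
it rescales the `i`-th block (0-indexed) by `h^{-(1/α + i)}`. -/
def Tinv {n : ℕ} {d : Fin n → ℕ} (α h : ℝ) (x : E n d) : E n d :=
  fun i => (h ^ ((1 : ℝ) / α + ((i : ℕ) : ℝ)))⁻¹ • x i

/-- `det 𝕋_h = h^{∑ i d_i (1/α + i)}` (0-indexed blocks). -/
def detT (n : ℕ) (d : Fin n → ℕ) (α h : ℝ) : ℝ :=
  h ^ (∑ i : Fin n, (d i : ℝ) * ((1 : ℝ) / α + ((i : ℕ) : ℝ)))

/-- A measurable Cauchy–Peano flow for `ẏ_u = A_u y_u + F(u, y_u)` on `[0,T]`: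
`θ_{t,s}(z) = z - ∫_t^s (A_u θ_{u,s}(z) + F(u, θ_{u,s}(z))) du` (signed integral).
For `t ≤ s`, `θ_{t,s}(y)` is the backward flow with terminal value `y` at time `s`,
and `θ_{s,t}(x)` is the forward flow started from `x` at time `t`. -/
def IsFlow {n : ℕ} {d : Fin n → ℕ} (T : ℝ) (A : ℝ → E n d →L[ℝ] E n d)
    (F : ℝ → E n d → E n d) (θ : ℝ → ℝ → E n d → E n d) : Prop :=
  Measurable (fun p : ℝ × ℝ × E n d => θ p.1 p.2.1 p.2.2) ∧
  ∀ t s : ℝ, t ∈ Icc (0 : ℝ) T → s ∈ Icc (0 : ℝ) T → ∀ z : E n d,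
    θ t s z = z - ∫ u in t..s, (A u (θ u s z) + F u (θ u s z))

/-- The time-ordered resolvent of `A`, in applied form:
`R_{s,t} x = x + ∫_t^s A_u (R_{u,t} x) du`, i.e. `∂_s R_{s,t} = A_s R_{s,t}`, `R_{t,t} = Id`. -/
def IsResolvent {n : ℕ} {d : Fin n → ℕ} (T : ℝ) (A : ℝ → E n d →L[ℝ] E n d)
    (R : ℝ → ℝ → E n d →L[ℝ] E n d) : Prop :=
  ∀ s t : ℝ, s ∈ Icc (0 : ℝ) T → t ∈ Icc (0 : ℝ) T → ∀ x : E n d,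
    R s t x = x + ∫ u in t..s, A u (R u t x)

/-- The frozen shift `m̃^{τ,ξ}_{s,t}(x) = R_{s,t} x + ∫_t^s R_{s,u} F(u, θ_{u,τ}(ξ)) du`. -/
def shiftm {n : ℕ} {d : Fin n → ℕ} (F : ℝ → E n d → E n d)
    (θ : ℝ → ℝ → E n d → E n d) (R : ℝ → ℝ → E n d →L[ℝ] E n d)
    (τ : ℝ) (ξ : E n d) (s t : ℝ) (x : E n d) : E n d :=
  R s t x + ∫ u in t..s, R s u (F u (θ u τ ξ))

/-- Family of smooth compactly supported probability-density mollifiers. -/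
def IsMollifier {n : ℕ} {d : Fin n → ℕ} (ρ : Fin n → E n d → ℝ) : Prop :=
  ∀ i, ContDiff ℝ (⊤ : ℕ∞) (ρ i) ∧ HasCompactSupport (ρ i) ∧ (∀ ω, 0 ≤ ρ i ω) ∧
    (∫ ω : E n d, ρ i ω) = 1

/-- The multiscale mollification `F^δ` of the drift `F`:
`F_i^δ(t,z) = ∫ F(t, z - δ_{i·} ⋄ ω)_i ρ_i(ω) dω`, block `j` being mollified at scale `δ_{ij}`
(equivalently, the anisotropic convolution of `F_i(t,·)` with the rescaled mollifier). -/
def molF {n : ℕ} {d : Fin n → ℕ} (ρ : Fin n → E n d → ℝ) (δ : Fin n → Fin n → ℝ)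
    (F : ℝ → E n d → E n d) (t : ℝ) (z : E n d) : E n d :=
  fun i => ∫ ω : E n d, ρ i ω • F t (fun j => z j - δ i j • ω j) i

/-- The standing assumptions of the degenerate chain setup: dimensions, sub-criticality,
lower-triangular block structure of `A`, upper-diagonal dependence, boundedness and
anisotropic Hölder continuity of `F` (indices are 0-based: block `i` here is block `i+1`
of the paper). -/
structure ChainHyp (n : ℕ) [NeZero n] (d : Fin n → ℕ) (α T K : ℝ)
    (A : ℝ → E n d →L[ℝ] E n d) (F : ℝ → E n d → E n d) (β : Fin n → ℝ) : Prop where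
  hd : ∀ i, 1 ≤ d i
  hdmono : ∀ i j : Fin n, i ≤ j → d j ≤ d i
  hα₁ : 1 < α
  hα₂ : α < 2
  hT : 0 < T
  hK : 1 ≤ K
  hAmeas : ∀ x : E n d, Measurable fun t => A t x
  hAbdd : ∃ CA : ℝ, ∀ t : ℝ, ‖A t‖ ≤ CA
  hAblock : ∀ (t : ℝ) (i j : Fin n) (v : Fin (d j) → ℝ),
    (j : ℕ) + 1 < (i : ℕ) → A t (Pi.single j v) i = 0
  hFmeas : Measurable fun p : ℝ × E n d => F p.1 p.2
  hFdep : ∀ (i : Fin n) (t : ℝ) (x x' : E n d), (∀ j, i ≤ j → x j = x' j) → F t x i = F t x' i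
  hF0 : ∀ (t : ℝ) (i : Fin n), ‖F t 0 i‖ ≤ K
  hβ0 : 0 < β 0 ∧ β 0 ≤ 1
  hβ : ∀ j : Fin n, 1 ≤ (j : ℕ) →
    (1 + α * (((j : ℕ) : ℝ) - 1)) / (1 + α * ((j : ℕ) : ℝ)) < β j ∧ β j ≤ 1
  hHolder : ∃ CH : ℝ, 0 < CH ∧
    (∀ (j : Fin n) (t : ℝ) (x x' : E n d), (∀ k, k ≠ j → x k = x' k) →
      ‖F t x 0 - F t x' 0‖ ≤ CH * ‖x j - x' j‖ ^ (β 0)) ∧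
    ∀ (i j : Fin n), 1 ≤ (i : ℕ) → i ≤ j → ∀ (t : ℝ) (x x' : E n d),
      (∀ k, k ≠ j → x k = x' k) →
      ‖F t x i - F t x' i‖ ≤ CH * ‖x j - x' j‖ ^ (β j)

/-! ### Gronwall estimates for integral equations -/

lemma gronwall_real {a b c k : ℝ} (hk : 0 ≤ k) {g : ℝ → ℝ}
    (hg : ContinuousOn g (Icc a b))
    (h : ∀ v ∈ Icc a b, g v ≤ c + k * ∫ u in a..v, g u) :
    ∀ v ∈ Icc a b, g v ≤ c * exp (k * (v - a)) := by
  intro v hv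
  have hab : a ≤ b := hv.1.trans hv.2
  have hgi : IntervalIntegrable g volume a b :=
    hg.intervalIntegrable_of_Icc hab
  set φ : ℝ → ℝ := fun v => (c + k * ∫ u in a..v, g u) * exp (-(k * (v - a))) with hφ
  have hcont : ContinuousOn φ (Icc a b) := by
    have h1 : ContinuousOn (fun v => ∫ u in a..v, g u) (Icc a b) := by
      have := intervalIntegral.continuousOn_primitive_interval'
        (f := g) (μ := volume) (a := a) (b₁ := a) (b₂ := b) hgi left_mem_uIcc
      rwa [uIcc_of_le hab] at this
    have h2 : ContinuousOn (fun v : ℝ => exp (-(k * (v - a)))) (Icc a b) := by fun_prop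
    exact (continuousOn_const.add (continuousOn_const.mul h1)).mul h2
  have hder : ∀ w ∈ Ioo a b, HasDerivAt φ
      ((k * g w) * exp (-(k * (w - a)))
        + (c + k * ∫ u in a..w, g u) * (exp (-(k * (w - a))) * (-(k * 1)))) w := by
    intro w hw
    have hc : ContinuousAt g w := hg.continuousAt (Icc_mem_nhds hw.1 hw.2)
    have h1 : HasDerivAt (fun v => ∫ u in a..v, g u) (g w) w := by
      refine intervalIntegral.integral_hasDerivAt_right
        (hgi.mono_set ?_) ?_ hc
      · rw [uIcc_of_le hab, uIcc_of_le hw.1.le]; exact Icc_subset_Icc_right hw.2.le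
      · exact (hg.mono Ioo_subset_Icc_self).stronglyMeasurableAtFilter isOpen_Ioo w hw
    have h2 : HasDerivAt (fun v : ℝ => exp (-(k * (v - a))))
        (exp (-(k * (w - a))) * (-(k * 1))) w :=
      ((((hasDerivAt_id w).sub_const a).const_mul k).neg).exp
    exact ((h1.const_mul k).const_add c).mul h2
  have hanti : AntitoneOn φ (Icc a b) := by
    refine antitoneOn_of_deriv_nonpos (convex_Icc a b) hcont ?_ ?_
    · rw [interior_Icc]
      exact fun w hw => (hder w hw).differentiableAt.differentiableWithinAt
    · rw [interior_Icc]
      intro w hw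
      rw [(hder w hw).deriv]
      have h3 := h w ⟨hw.1.le, hw.2.le⟩
      have h4 : 0 ≤ k * exp (-(k * (w - a))) := by positivity
      nlinarith [mul_le_mul_of_nonneg_left h3 h4]
  have h5 := hanti (left_mem_Icc.2 hab) hv hv.1
  simp only [hφ, intervalIntegral.integral_same, sub_self, mul_zero, neg_zero, exp_zero, mul_one,
    add_zero] at h5
  refine (h v hv).trans ?_
  rw [Real.exp_neg] at h5
  rwa [← div_eq_mul_inv, div_le_iff₀ (exp_pos _)] at h5

/-- Any part of `[0,T]` inherits interval integrability. -/
lemma IntervalIntegrable.sub_Icc {V : Type*} [NormedAddCommGroup V] {T : ℝ} {f : ℝ → V}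
    (hf : IntervalIntegrable f volume 0 T) {a b : ℝ}
    (ha : a ∈ Icc 0 T) (hb : b ∈ Icc 0 T) : IntervalIntegrable f volume a b := by
  refine hf.mono_set ?_
  rw [uIcc_of_le (ha.1.trans ha.2)]
  exact uIcc_subset_Icc ha hb

section Abstract

variable {V : Type*} [NormedAddCommGroup V] [NormedSpace ℝ V]

lemma gronwall_forward {a b P k : ℝ} (hP : 0 ≤ P) (hk : 0 ≤ k) {Y B : ℝ → V} {Y₀ : V}
    (hB : IntervalIntegrable B volume a b)
    (hY : ∀ v ∈ Icc a b, Y v = Y₀ + ∫ u in a..v, B u)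
    (hb : ∀ u ∈ Icc a b, ‖B u‖ ≤ P + k * ‖Y u‖) :
    ∀ v ∈ Icc a b, ‖Y v‖ ≤ (‖Y₀‖ + P * (b - a)) * exp (k * (b - a)) := by
  intro v hv
  have hab : a ≤ b := hv.1.trans hv.2
  have hYc : ContinuousOn Y (Icc a b) := by
    have := intervalIntegral.continuousOn_primitive_interval'
      (f := B) (μ := volume) (a := a) (b₁ := a) (b₂ := b) hB left_mem_uIcc
    rw [uIcc_of_le hab] at this
    exact (continuousOn_const.add this).congr hY
  have hYi : IntervalIntegrable (fun u => ‖Y u‖) volume a b :=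
    hYc.norm.intervalIntegrable_of_Icc hab
  have key : ∀ v ∈ Icc a b, ‖Y v‖ ≤ (‖Y₀‖ + P * (b - a)) + k * ∫ u in a..v, ‖Y u‖ := by
    intro v hv
    have hsub : uIcc a v ⊆ uIcc a b := by
      rw [uIcc_of_le hab, uIcc_of_le hv.1]; exact Icc_subset_Icc_right hv.2
    have h1 : ‖∫ u in a..v, B u‖ ≤ ∫ u in a..v, (P + k * ‖Y u‖) := by
      refine intervalIntegral.norm_integral_le_of_norm_le hv.1 ?_ ?_
      · exact Filter.Eventually.of_forall fun u hu => hb u ⟨hu.1.le, hu.2.trans hv.2⟩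
      · exact intervalIntegrable_const.add ((hYi.mono_set hsub).const_mul k)
    rw [intervalIntegral.integral_add intervalIntegrable_const ((hYi.mono_set hsub).const_mul k),
      intervalIntegral.integral_const, intervalIntegral.integral_const_mul, smul_eq_mul] at h1
    rw [hY v hv]
    refine (norm_add_le _ _).trans ?_
    have : (v - a) * P ≤ P * (b - a) := by nlinarith [hv.2]
    linarith
  refine (gronwall_real hk hYc.norm key v hv).trans ?_
  have : 0 ≤ ‖Y₀‖ + P * (b - a) := by
    have := sub_nonneg.2 hab
    positivity
  have h2 := hv.2
  gcongr

lemma gronwall_backward {a b P k : ℝ} (hP : 0 ≤ P) (hk : 0 ≤ k) {Y B : ℝ → V} {Y₀ : V}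
    (hB : IntervalIntegrable B volume a b)
    (hY : ∀ v ∈ Icc a b, Y v = Y₀ + ∫ u in b..v, B u)
    (hb : ∀ u ∈ Icc a b, ‖B u‖ ≤ P + k * ‖Y u‖) :
    ∀ v ∈ Icc a b, ‖Y v‖ ≤ (‖Y₀‖ + P * (b - a)) * exp (k * (b - a)) := by
  intro v hv
  have h := gronwall_forward (a := -b) (b := -a) hP hk (Y := fun u => Y (-u))
    (B := fun u => -B (-u)) (Y₀ := Y₀) ?_ ?_ ?_ (-v) ⟨by linarith [hv.2], by linarith [hv.1]⟩
  · simpa [add_comm, sub_eq_add_neg] using h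
  · exact ((IntervalIntegrable.iff_comp_neg (by simp)).1 hB).symm.neg
  · intro u hu
    rw [hY (-u) ⟨by linarith [hu.2], by linarith [hu.1]⟩, intervalIntegral.integral_neg,
      intervalIntegral.integral_comp_neg, neg_neg, ← intervalIntegral.integral_symm]
  · intro u hu
    rw [norm_neg]
    exact hb (-u) ⟨by linarith [hu.2], by linarith [hu.1]⟩

/-- Two-sided Gronwall estimate, for an integral equation based at any time `t₀ ∈ [0,T]`. -/
lemma gronwall_two_sided {t₀ T P k : ℝ} (hP : 0 ≤ P) (hk : 0 ≤ k) {Y B : ℝ → V} {Y₀ : V}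
    (ht₀ : t₀ ∈ Icc 0 T) (hB : IntervalIntegrable B volume 0 T)
    (hY : ∀ v ∈ Icc 0 T, Y v = Y₀ + ∫ u in t₀..v, B u)
    (hb : ∀ u ∈ Icc 0 T, ‖B u‖ ≤ P + k * ‖Y u‖) :
    ∀ v ∈ Icc 0 T, ‖Y v‖ ≤ (‖Y₀‖ + P * T) * exp (k * T) := by
  intro v hv
  have hT : 0 ≤ T := ht₀.1.trans ht₀.2
  have h1 : uIcc t₀ T ⊆ uIcc 0 T := by
    rw [uIcc_of_le hT, uIcc_of_le ht₀.2]; exact Icc_subset_Icc_left ht₀.1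
  have h2 : uIcc 0 t₀ ⊆ uIcc 0 T := by
    rw [uIcc_of_le hT, uIcc_of_le ht₀.1]; exact Icc_subset_Icc_right ht₀.2
  rcases le_total t₀ v with hle | hle
  · refine (gronwall_forward hP hk (hB.mono_set h1)
      (fun w hw => hY w ⟨ht₀.1.trans hw.1, hw.2⟩)
      (fun w hw => hb w ⟨ht₀.1.trans hw.1, hw.2⟩) v ⟨hle, hv.2⟩).trans ?_
    have := ht₀.1
    have := ht₀.2
    gcongr <;> linarith
  · refine (gronwall_backward hP hk (hB.mono_set h2)
      (fun w hw => hY w ⟨hw.1, hw.2.trans ht₀.2⟩)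
      (fun w hw => hb w ⟨hw.1, hw.2.trans ht₀.2⟩) v ⟨hv.1, hle⟩).trans ?_
    have := ht₀.1
    have := ht₀.2
    gcongr <;> linarith

/-! ### Integrability along solutions of integral equations -/

variable [MeasurableSpace V] [BorelSpace V] [SecondCountableTopology V]

/-- If `φ` solves an integral equation with linearly growing right-hand side, the integrand is
genuinely integrable. The point is that the Bochner integral of a non-integrable function is `0`:
beyond the first time at which integrability fails, `φ` is the constant `z`, and before
that time it is bounded by Gronwall, so the integrand is bounded and measurable throughout. -/
lemma integrable_forward {a b k : ℝ} (hab : a ≤ b) (hk : 0 ≤ k) {H : ℝ → V → V}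
    (hH : Measurable fun p : ℝ × V => H p.1 p.2)
    (hlin : ∀ u x, ‖H u x‖ ≤ k * (1 + ‖x‖)) {φ : ℝ → V} {z : V}
    (hφ : ∀ t ∈ Icc a b, φ t = z + ∫ u in a..t, H u (φ u)) :
    IntervalIntegrable (fun u => H u (φ u)) volume a b := by
  set B : ℝ → V := fun u => H u (φ u) with hBdef
  set S : Set ℝ := {t | t ∈ Icc a b ∧ IntervalIntegrable B volume a t} with hS
  set t₀ : ℝ := sSup S with ht₀
  have haS : a ∈ S := ⟨left_mem_Icc.2 hab, IntervalIntegrable.refl⟩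
  have hSb : BddAbove S := ⟨b, fun t ht => ht.1.2⟩
  have hlt : ∀ t, a ≤ t → t < t₀ → t ∈ S := by
    intro t hat ht
    obtain ⟨t', ht', htt'⟩ := exists_lt_of_lt_csSup ⟨a, haS⟩ ht
    refine ⟨⟨hat, htt'.le.trans ht'.1.2⟩, ht'.2.mono_set ?_⟩
    rw [uIcc_of_le hat, uIcc_of_le (hat.trans htt'.le)]
    exact Icc_subset_Icc_right htt'.le
  have hgt : ∀ t, t ≤ b → t₀ < t → φ t = z := by
    intro t htb ht
    have hat : a ≤ t := (le_csSup hSb haS).trans ht.le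
    rw [hφ t ⟨hat, htb⟩, intervalIntegral.integral_undef, add_zero]
    exact fun hi => absurd (le_csSup hSb (show t ∈ S from ⟨⟨hat, htb⟩, hi⟩)) (not_le.2 ht)
  set M : ℝ := (‖z‖ + k * (b - a)) * exp (k * (b - a)) with hM
  have hba : 0 ≤ b - a := sub_nonneg.2 hab
  have hzM : ‖z‖ ≤ M := by
    have h1 : (1 : ℝ) ≤ exp (k * (b - a)) := Real.one_le_exp (by positivity)
    have h2 : 0 ≤ k * (b - a) := by positivity
    nlinarith [norm_nonneg z]
  have hbd : ∀ t ∈ Icc a b, t ≠ t₀ → ‖φ t‖ ≤ M := by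
    intro t ht hne
    rcases lt_or_gt_of_ne hne with h | h
    · have hts := hlt t ht.1 h
      refine (gronwall_forward hk hk hts.2 (Y₀ := z)
        (fun w hw => hφ w ⟨hw.1, hw.2.trans ht.2⟩)
        (fun w _ => (hlin w (φ w)).trans (by linarith)) t ⟨ht.1, le_rfl⟩).trans ?_
      have := ht.1
      have := ht.2
      have : 0 ≤ t - a := by linarith
      rw [hM]
      gcongr
    · rw [hgt t ht.2 h]; exact hzM
  have hmeas : AEStronglyMeasurable B (volume.restrict (Ioc a b)) := by
    obtain ⟨w, -, hwlt, hwlim⟩ := exists_seq_strictMono_tendsto t₀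
    have h1 : AEStronglyMeasurable B (volume.restrict (⋃ n, Ioc a (w n))) := by
      rw [aestronglyMeasurable_iUnion_iff]
      intro n
      rcases le_total a (w n) with h | h
      · exact (hlt _ h (hwlt n)).2.1.aestronglyMeasurable
      · rw [Ioc_eq_empty (not_lt.2 h)]; simp
    have h2 : AEStronglyMeasurable B (volume.restrict (Ioc t₀ b)) := by
      have : Measurable fun u => H u z := hH.comp (measurable_id.prodMk measurable_const)
      refine this.aestronglyMeasurable.congr ?_
      refine (ae_restrict_iff' measurableSet_Ioc).2 (Filter.Eventually.of_forall fun u hu => ?_)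
      simp only [hBdef]
      rw [hgt u hu.2 hu.1]
    have h3 : AEStronglyMeasurable B (volume.restrict ({t₀} : Set ℝ)) := by simp
    refine (aestronglyMeasurable_union_iff.2
      ⟨aestronglyMeasurable_union_iff.2 ⟨h1, h3⟩, h2⟩).mono_measure
        (Measure.restrict_mono ?_ le_rfl)
    intro u hu
    rcases lt_trichotomy u t₀ with h | h | h
    · obtain ⟨n, hn⟩ := (hwlim.eventually (lt_mem_nhds h)).exists
      exact Or.inl (Or.inl (mem_iUnion.2 ⟨n, hu.1, hn.le⟩))
    · exact Or.inl (Or.inr h)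
    · exact Or.inr ⟨h, hu.2⟩
  rw [intervalIntegrable_iff_integrableOn_Ioc_of_le hab]
  refine IntegrableOn.of_bound (by simp) hmeas (k * (1 + M)) ?_
  have hne : ∀ᵐ u ∂(volume.restrict (Ioc a b)), u ≠ t₀ :=
    ae_restrict_of_ae (by simp [ae_iff])
  filter_upwards [hne, ae_restrict_mem measurableSet_Ioc] with u hu hu'
  refine (hlin u (φ u)).trans ?_
  have := hbd u ⟨hu'.1.le, hu'.2⟩ hu
  gcongr

lemma integrable_backward {a b k : ℝ} (hab : a ≤ b) (hk : 0 ≤ k) {H : ℝ → V → V}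
    (hH : Measurable fun p : ℝ × V => H p.1 p.2)
    (hlin : ∀ u x, ‖H u x‖ ≤ k * (1 + ‖x‖)) {φ : ℝ → V} {z : V}
    (hφ : ∀ t ∈ Icc a b, φ t = z + ∫ u in b..t, H u (φ u)) :
    IntervalIntegrable (fun u => H u (φ u)) volume a b := by
  have h := integrable_forward (a := -b) (b := -a) (by linarith) hk
    (H := fun u x => -H (-u) x) (φ := fun u => φ (-u)) (z := z) ?_ ?_ ?_
  · have h' := ((IntervalIntegrable.iff_comp_neg (by simp)).1 h).symm.neg
    simp only [neg_neg] at h'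
    convert h' using 1
    ext u
    simp
  · exact (hH.comp ((measurable_fst.neg).prodMk measurable_snd)).neg
  · intro u x
    rw [norm_neg]; exact hlin _ _
  · intro u hu
    rw [hφ (-u) ⟨by linarith [hu.2], by linarith [hu.1]⟩, intervalIntegral.integral_neg,
      intervalIntegral.integral_comp_neg (fun u => H u (φ u)), neg_neg,
      ← intervalIntegral.integral_symm]

lemma integrable_two_sided {t₀ T k : ℝ} (ht₀ : t₀ ∈ Icc 0 T) (hk : 0 ≤ k) {H : ℝ → V → V}
    (hH : Measurable fun p : ℝ × V => H p.1 p.2)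
    (hlin : ∀ u x, ‖H u x‖ ≤ k * (1 + ‖x‖)) {φ : ℝ → V} {z : V}
    (hφ : ∀ t ∈ Icc 0 T, φ t = z + ∫ u in t₀..t, H u (φ u)) :
    IntervalIntegrable (fun u => H u (φ u)) volume 0 T :=
  (integrable_backward ht₀.1 hk hH hlin fun t ht => hφ t ⟨ht.1, ht.2.trans ht₀.2⟩).trans
    (integrable_forward ht₀.2 hk hH hlin fun t ht => hφ t ⟨ht₀.1.trans ht.1, ht.2⟩)

/-! ### Fubini on a triangle and variation of constants -/

lemma fubini_triangle {a b C : ℝ} (hab : a ≤ b) {g : ℝ → ℝ → V}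
    (hg : Measurable fun p : ℝ × ℝ => g p.1 p.2)
    (hC : ∀ r ∈ Icc a b, ∀ u ∈ Icc a b, ‖g r u‖ ≤ C) :
    IntervalIntegrable (fun r => ∫ u in a..r, g r u) volume a b ∧
    ∫ r in a..b, ∫ u in a..r, g r u = ∫ u in a..b, ∫ r in u..b, g r u := by
  set G : ℝ × ℝ → V := {p : ℝ × ℝ | p.2 ≤ p.1}.indicator (fun p => g p.1 p.2) with hG
  have hGm : Measurable G := hg.indicator (measurableSet_le measurable_snd measurable_fst)
  have hGi : Integrable (Function.uncurry fun r u => G (r, u))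
      ((volume.restrict (Ioc a b)).prod (volume.restrict (Ioc a b))) := by
    rw [Measure.prod_restrict]
    refine IntegrableOn.of_bound ?_ hGm.aestronglyMeasurable C ?_
    · rw [Measure.prod_prod]
      simp only [Real.volume_Ioc]
      exact ENNReal.mul_lt_top ENNReal.ofReal_lt_top ENNReal.ofReal_lt_top
    · filter_upwards [ae_restrict_mem (measurableSet_Ioc.prod measurableSet_Ioc)] with p hp
      exact (norm_indicator_le_norm_self (fun p : ℝ × ℝ => g p.1 p.2) p).trans
        (hC _ ⟨hp.1.1.le, hp.1.2⟩ _ ⟨hp.2.1.le, hp.2.2⟩)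
  have h1 : ∀ r ∈ Ioc a b, ∫ u in Ioc a b, G (r, u) = ∫ u in a..r, g r u := by
    intro r hr
    have : (fun u => G (r, u)) = (Iic r).indicator (fun u => g r u) := by
      ext u
      simp only [hG, indicator, mem_ofPred_eq, mem_Iic]
    rw [this, setIntegral_indicator measurableSet_Iic, Ioc_inter_Iic, min_eq_right hr.2,
      intervalIntegral.integral_of_le hr.1.le]
  have h2 : ∀ u ∈ Ioc a b, ∫ r in Ioc a b, G (r, u) = ∫ r in u..b, g r u := by
    intro u hu
    have : (fun r => G (r, u)) = (Ici u).indicator (fun r => g r u) := by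
      ext r
      simp only [hG, indicator, mem_ofPred_eq, mem_Ici]
    rw [this, setIntegral_indicator measurableSet_Ici,
      intervalIntegral.integral_of_le hu.2, ← integral_Icc_eq_integral_Ioc]
    congr 2
    ext r
    simp only [mem_inter_iff, mem_Ioc, mem_Ici, mem_Icc]
    exact ⟨fun h => ⟨h.2, h.1.2⟩, fun h => ⟨⟨hu.1.trans_le h.1, h.2⟩, h.1⟩⟩
  constructor
  · rw [intervalIntegrable_iff_integrableOn_Ioc_of_le hab]
    exact hGi.integral_prod_left.congr
      ((ae_restrict_iff' measurableSet_Ioc).2 (Filter.Eventually.of_forall h1))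
  · rw [intervalIntegral.integral_of_le hab, intervalIntegral.integral_of_le hab,
      ← setIntegral_congr_fun measurableSet_Ioc h1, ← setIntegral_congr_fun measurableSet_Ioc h2]
    exact integral_integral_swap hGi

section Resolvent

variable {T CA : ℝ} {A : ℝ → V →L[ℝ] V} {R : ℝ → ℝ → V →L[ℝ] V}

lemma measurable_apply_of_measurable (hA : ∀ x, Measurable fun t => A t x) :
    Measurable fun p : ℝ × V => A p.1 p.2 := by
  have := measurable_uncurry_of_continuous_of_measurable (u := fun (x : V) (t : ℝ) => A t x)
    (fun t => (A t).continuous) hA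
  exact this.comp measurable_swap

lemma resolvent_integrable (hA : ∀ x, Measurable fun t => A t x) (hCA : ∀ t, ‖A t‖ ≤ CA)
    (hR : ∀ s t : ℝ, s ∈ Icc (0 : ℝ) T → t ∈ Icc (0 : ℝ) T → ∀ x : V,
      R s t x = x + ∫ u in t..s, A u (R u t x))
    {t : ℝ} (ht : t ∈ Icc 0 T) (x : V) :
    IntervalIntegrable (fun u => A u (R u t x)) volume 0 T := by
  have hCA0 : 0 ≤ CA := (norm_nonneg _).trans (hCA 0)
  refine integrable_two_sided ht hCA0 (H := fun u x => A u x) (z := x)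
    (φ := fun u => R u t x) (measurable_apply_of_measurable hA) ?_ (fun s hs => hR s t hs ht x)
  intro u y
  have h1 := (A u).le_of_opNorm_le (hCA u) y
  nlinarith [norm_nonneg y]

lemma resolvent_bound (hA : ∀ x, Measurable fun t => A t x) (hCA : ∀ t, ‖A t‖ ≤ CA)
    (hR : ∀ s t : ℝ, s ∈ Icc (0 : ℝ) T → t ∈ Icc (0 : ℝ) T → ∀ x : V,
      R s t x = x + ∫ u in t..s, A u (R u t x))
    {s t : ℝ} (hs : s ∈ Icc 0 T) (ht : t ∈ Icc 0 T) (x : V) :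
    ‖R s t x‖ ≤ exp (CA * T) * ‖x‖ := by
  have hCA0 : 0 ≤ CA := (norm_nonneg _).trans (hCA 0)
  have := gronwall_two_sided le_rfl hCA0 ht (Y := fun u => R u t x)
    (resolvent_integrable hA hCA hR ht x) (fun s hs => hR s t hs ht x)
    (fun u _ => by simpa using (A u).le_of_opNorm_le (hCA u) (R u t x)) s hs
  simpa [mul_comm] using this

lemma resolvent_lipschitz_left (hA : ∀ x, Measurable fun t => A t x) (hCA : ∀ t, ‖A t‖ ≤ CA)
    (hR : ∀ s t : ℝ, s ∈ Icc (0 : ℝ) T → t ∈ Icc (0 : ℝ) T → ∀ x : V,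
      R s t x = x + ∫ u in t..s, A u (R u t x))
    {s s' t : ℝ} (hs : s ∈ Icc 0 T) (hs' : s' ∈ Icc 0 T) (ht : t ∈ Icc 0 T) (x : V) :
    ‖R s t x - R s' t x‖ ≤ CA * exp (CA * T) * |s - s'| * ‖x‖ := by
  have hCA0 : 0 ≤ CA := (norm_nonneg _).trans (hCA 0)
  have hi := resolvent_integrable hA hCA hR ht x
  rw [hR s t hs ht, hR s' t hs' ht, add_sub_add_left_eq_sub,
    intervalIntegral.integral_interval_sub_left (hi.sub_Icc ht hs) (hi.sub_Icc ht hs')]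
  refine (intervalIntegral.norm_integral_le_of_norm_le_const
    (C := CA * (exp (CA * T) * ‖x‖)) fun u hu => ?_).trans (le_of_eq (by ring))
  have hu' : u ∈ Icc 0 T := uIcc_subset_Icc hs' hs (uIoc_subset_uIcc hu)
  refine ((A u).le_of_opNorm_le (hCA u) _).trans ?_
  gcongr
  exact resolvent_bound hA hCA hR hu' ht x

/-- Lipschitz dependence on the initial time: `R r u x - R r u' x` solves the linear equation
started at time `u'` from `R u' u x - x`, which is of size `|u - u'|`. -/
lemma resolvent_lipschitz_right (hA : ∀ x, Measurable fun t => A t x) (hCA : ∀ t, ‖A t‖ ≤ CA)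
    (hR : ∀ s t : ℝ, s ∈ Icc (0 : ℝ) T → t ∈ Icc (0 : ℝ) T → ∀ x : V,
      R s t x = x + ∫ u in t..s, A u (R u t x))
    {r u u' : ℝ} (hr : r ∈ Icc 0 T) (hu : u ∈ Icc 0 T) (hu' : u' ∈ Icc 0 T) (x : V) :
    ‖R r u x - R r u' x‖ ≤ exp (CA * T) * (CA * exp (CA * T)) * |u - u'| * ‖x‖ := by
  have hCA0 : 0 ≤ CA := (norm_nonneg _).trans (hCA 0)
  have hi := resolvent_integrable hA hCA hR hu x
  have hi' := resolvent_integrable hA hCA hR hu' x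
  have h1 : ∀ u ∈ Icc 0 T, R u u x = x := fun u hu => by rw [hR u u hu hu]; simp
  have key := gronwall_two_sided le_rfl hCA0 hu' (Y := fun v => R v u x - R v u' x)
    (Y₀ := R u' u x - x) (B := fun v => A v (R v u x - R v u' x))
    (by simpa only [map_sub] using hi.sub hi') ?_
    (fun v _ => by simpa using (A v).le_of_opNorm_le (hCA v) (R v u x - R v u' x)) r hr
  · have h2 := resolvent_lipschitz_left hA hCA hR hu' hu hu x
    rw [h1 u hu, abs_sub_comm] at h2
    refine key.trans ?_
    rw [zero_mul, add_zero, mul_comm]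
    calc exp (CA * T) * ‖R u' u x - x‖
        ≤ exp (CA * T) * (CA * exp (CA * T) * |u - u'| * ‖x‖) := by gcongr
      _ = _ := by ring
  · intro v hv
    simp only [map_sub]
    rw [intervalIntegral.integral_sub (hi.sub_Icc hu' hv) (hi'.sub_Icc hu' hv),
      hR v u' hv hu', hR v u hv hu, hR u' u hu' hu,
      ← intervalIntegral.integral_add_adjacent_intervals (hi.sub_Icc hu hu') (hi.sub_Icc hu' hv)]
    abel

/-- The resolvent, with both times clamped to `[0,T]`, is jointly continuous. -/
lemma resolvent_continuous (hA : ∀ x, Measurable fun t => A t x) (hCA : ∀ t, ‖A t‖ ≤ CA)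
    (hR : ∀ s t : ℝ, s ∈ Icc (0 : ℝ) T → t ∈ Icc (0 : ℝ) T → ∀ x : V,
      R s t x = x + ∫ u in t..s, A u (R u t x)) (hT : 0 ≤ T) :
    Continuous fun p : ℝ × ℝ =>
      R (projIcc 0 T hT p.1 : ℝ) (projIcc 0 T hT p.2 : ℝ) := by
  have hCA0 : 0 ≤ CA := (norm_nonneg _).trans (hCA 0)
  set c : ℝ → ℝ := fun u => (projIcc 0 T hT u : ℝ) with hc
  have hcc : Continuous c := continuous_subtype_val.comp continuous_projIcc
  have hcm : ∀ u, c u ∈ Icc 0 T := fun u => (projIcc 0 T hT u).2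
  rw [continuous_iff_continuousAt]
  intro p
  rw [ContinuousAt, tendsto_iff_norm_sub_tendsto_zero]
  have hlim : Filter.Tendsto (fun q : ℝ × ℝ => CA * exp (CA * T) * |c q.1 - c p.1| +
      exp (CA * T) * (CA * exp (CA * T)) * |c q.2 - c p.2|) (nhds p) (nhds 0) := by
    have : Continuous (fun q : ℝ × ℝ => CA * exp (CA * T) * |c q.1 - c p.1| +
      exp (CA * T) * (CA * exp (CA * T)) * |c q.2 - c p.2|) := by fun_prop
    simpa using this.tendsto p
  refine squeeze_zero (fun _ => norm_nonneg _) (fun q => ?_) hlim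
  refine ContinuousLinearMap.opNorm_le_bound _ (by positivity) fun x => ?_
  have h1 := resolvent_lipschitz_left hA hCA hR (hcm q.1) (hcm p.1) (hcm q.2) x
  have h2 := resolvent_lipschitz_right hA hCA hR (hcm p.1) (hcm q.2) (hcm p.2) x
  have h3 := norm_add_le (R (c q.1) (c q.2) x - R (c p.1) (c q.2) x)
    (R (c p.1) (c q.2) x - R (c p.1) (c p.2) x)
  rw [sub_add_sub_cancel] at h3
  rw [add_mul]
  exact h3.trans (add_le_add h1 h2)

/-- Variation of constants: `z v = ∫_t^v R v u (f u) du` solves `z' = A z + f`, `z t = 0`. -/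
lemma variation_of_constants [CompleteSpace V] (hA : ∀ x, Measurable fun t => A t x) (hCA : ∀ t, ‖A t‖ ≤ CA)
    (hR : ∀ s t : ℝ, s ∈ Icc (0 : ℝ) T → t ∈ Icc (0 : ℝ) T → ∀ x : V,
      R s t x = x + ∫ u in t..s, A u (R u t x))
    {t s : ℝ} (h0t : 0 ≤ t) (hts : t ≤ s) (hsT : s ≤ T)
    {f : ℝ → V} (hf : Measurable f) {Mf : ℝ} (hMf : ∀ u ∈ Icc t s, ‖f u‖ ≤ Mf) :
    IntervalIntegrable (fun v => A v (∫ u in t..v, R v u (f u))) volume t s ∧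
    ∀ v ∈ Icc t s, ∫ u in t..v, R v u (f u)
      = (∫ r in t..v, A r (∫ u in t..r, R r u (f u))) + ∫ r in t..v, f r := by
  have hCA0 : 0 ≤ CA := (norm_nonneg _).trans (hCA 0)
  have hT : 0 ≤ T := h0t.trans (hts.trans hsT)
  have hIcc : ∀ u ∈ Icc t s, u ∈ Icc 0 T := fun u hu => ⟨h0t.trans hu.1, hu.2.trans hsT⟩
  have hMf0 : 0 ≤ Mf := (norm_nonneg _).trans (hMf t (left_mem_Icc.2 hts))
  set c : ℝ → ℝ := fun u => (projIcc 0 T hT u : ℝ) with hc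
  have hcid : ∀ u ∈ Icc t s, c u = u := fun u hu => by
    simp only [hc]; rw [projIcc_of_mem hT (hIcc u hu)]
  have hcm : ∀ u, c u ∈ Icc 0 T := fun u => (projIcc 0 T hT u).2
  have hRc := resolvent_continuous hA hCA hR hT
  have hRm : Measurable fun p : ℝ × ℝ => R (c p.1) (c p.2) (f p.2) := by
    have h1 : Continuous fun q : (ℝ × ℝ) × V => R (c q.1.1) (c q.1.2) q.2 :=
      (hRc.comp continuous_fst).clm_apply continuous_snd
    exact h1.measurable.comp (measurable_id.prodMk (hf.comp measurable_snd))
  have hgm : Measurable fun p : ℝ × ℝ => A p.1 (R (c p.1) (c p.2) (f p.2)) :=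
    (measurable_apply_of_measurable hA).comp (measurable_fst.prodMk hRm)
  have hRb : ∀ r, ∀ u ∈ Icc t s, ‖R (c r) (c u) (f u)‖ ≤ exp (CA * T) * Mf := fun r u hu =>
    (resolvent_bound hA hCA hR (hcm r) (hcm u) (f u)).trans (by gcongr; exact hMf u hu)
  have hgb : ∀ r ∈ Icc t s, ∀ u ∈ Icc t s,
      ‖A r (R (c r) (c u) (f u))‖ ≤ CA * (exp (CA * T) * Mf) := fun r _ u hu =>
    ((A r).le_of_opNorm_le (hCA r) _).trans (by gcongr; exact hRb r u hu)
  have hRi : ∀ r, ∀ v ∈ Icc t s,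
      IntervalIntegrable (fun u => R (c r) (c u) (f u)) volume t v := by
    intro r v hv
    rw [intervalIntegrable_iff_integrableOn_Ioc_of_le hv.1]
    refine IntegrableOn.of_bound (by simp)
      (hRm.comp (measurable_const.prodMk measurable_id)).aestronglyMeasurable
      (exp (CA * T) * Mf) ?_
    filter_upwards [ae_restrict_mem measurableSet_Ioc] with u hu
    exact hRb r u ⟨hu.1.le, hu.2.trans hv.2⟩
  have hfi : ∀ v ∈ Icc t s, IntervalIntegrable f volume t v := by
    intro v hv
    rw [intervalIntegrable_iff_integrableOn_Ioc_of_le hv.1]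
    refine IntegrableOn.of_bound (by simp) hf.aestronglyMeasurable Mf ?_
    filter_upwards [ae_restrict_mem measurableSet_Ioc] with u hu
    exact hMf u ⟨hu.1.le, hu.2.trans hv.2⟩
  -- on `[t,s]` clamping is invisible
  have hclamp : ∀ v ∈ Icc t s, ∫ u in t..v, R v u (f u) = ∫ u in t..v, R (c v) (c u) (f u) := by
    intro v hv
    refine intervalIntegral.integral_congr fun u hu => ?_
    rw [uIcc_of_le hv.1] at hu
    simp only [hcid v hv, hcid u ⟨hu.1, hu.2.trans hv.2⟩]
  have hinner : ∀ r ∈ Icc t s, A r (∫ u in t..r, R r u (f u))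
      = ∫ u in t..r, A r (R (c r) (c u) (f u)) := fun r hr => by
    rw [hclamp r hr, ContinuousLinearMap.intervalIntegral_comp_comm _ (hRi r r hr)]
  constructor
  · refine (fubini_triangle hts hgm hgb).1.congr fun r hr => ?_
    rw [uIoc_of_le hts] at hr
    exact (hinner r ⟨hr.1.le, hr.2⟩).symm
  · intro v hv
    have hsub : Icc t v ⊆ Icc t s := Icc_subset_Icc_right hv.2
    have h1 : ∫ r in t..v, A r (∫ u in t..r, R r u (f u))
        = ∫ r in t..v, ∫ u in t..r, A r (R (c r) (c u) (f u)) := by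
      refine intervalIntegral.integral_congr fun r hr => ?_
      rw [uIcc_of_le hv.1] at hr
      exact hinner r (hsub hr)
    have h2 : ∫ u in t..v, ∫ r in u..v, A r (R (c r) (c u) (f u))
        = ∫ u in t..v, (R (c v) (c u) (f u) - f u) := by
      refine intervalIntegral.integral_congr fun u hu => ?_
      rw [uIcc_of_le hv.1] at hu
      have hus := hsub hu
      have h3 := hR v u (hIcc v hv) (hIcc u hus) (f u)
      simp only [hcid v hv, hcid u hus]
      rw [h3, add_sub_cancel_left]
      refine intervalIntegral.integral_congr fun r hr => ?_
      rw [uIcc_of_le hu.2] at hr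
      simp only [hcid r ⟨hu.1.trans hr.1, hr.2.trans hv.2⟩]
    rw [h1, (fubini_triangle hv.1 hgm
      (fun r hr u hu => hgb r (hsub hr) u (hsub hu))).2, h2,
      intervalIntegral.integral_sub (hRi v v hv) (hfi v hv), hclamp v hv, sub_add_cancel]

end Resolvent

end Abstract

/-! ### Scaled estimates on the chain -/

section Chain

variable {n : ℕ} {d : Fin n → ℕ}

/-- The rescaling `Tinv α h` as a continuous linear map. -/
def TinvL (d : Fin n → ℕ) (α h : ℝ) : E n d →L[ℝ] E n d :=
  ContinuousLinearMap.pi fun i =>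
    (h ^ ((1 : ℝ) / α + ((i : ℕ) : ℝ)))⁻¹ • ContinuousLinearMap.proj i

lemma TinvL_apply (α h : ℝ) (x : E n d) : TinvL d α h x = Tinv α h x := rfl

lemma Tinv_norm_le {α h C : ℝ} (hh : 0 < h) (hC : 0 ≤ C) {x : E n d}
    (H : ∀ i : Fin n, (h ^ ((1 : ℝ) / α + ((i : ℕ) : ℝ)))⁻¹ * ‖x i‖ ≤ C) : ‖Tinv α h x‖ ≤ C := by
  refine (pi_norm_le_iff_of_nonneg hC).2 fun i => ?_
  rw [Tinv, norm_smul, Real.norm_of_nonneg (by positivity)]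
  exact H i

lemma block_norm_le {α h : ℝ} (hh : 0 < h) (x : E n d) (i : Fin n) :
    ‖x i‖ ≤ h ^ ((1 : ℝ) / α + ((i : ℕ) : ℝ)) * ‖Tinv α h x‖ := by
  have hp : 0 < h ^ ((1 : ℝ) / α + ((i : ℕ) : ℝ)) := by positivity
  have h1 := norm_le_pi_norm (Tinv α h x) i
  rw [Tinv, norm_smul, Real.norm_of_nonneg (by positivity)] at h1
  rwa [inv_mul_le_iff₀ hp] at h1

lemma rpow_le_const_mul_rpow {h T p a m : ℝ} (hh : 0 < h) (hT : h ≤ T) (h1 : a ≤ p)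
    (h2 : p - a ≤ m) : h ^ p ≤ (1 + T) ^ m * h ^ a := by
  have : h ^ p = h ^ (p - a) * h ^ a := by rw [← Real.rpow_add hh]; ring_nf
  rw [this]
  gcongr
  calc h ^ (p - a) ≤ (1 + T) ^ (p - a) :=
        Real.rpow_le_rpow hh.le (by linarith) (by linarith)
    _ ≤ (1 + T) ^ m := Real.rpow_le_rpow_of_exponent_le (by linarith) h2

/-- The sub-diagonal structure of `A` makes it of size `h⁻¹` in the intrinsic scale. -/
lemma scaled_linear {α T CA : ℝ} {A : E n d →L[ℝ] E n d} (hCA : ‖A‖ ≤ CA)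
    (hblock : ∀ (i j : Fin n) (v : Fin (d j) → ℝ),
      (j : ℕ) + 1 < (i : ℕ) → A (Pi.single j v) i = 0)
    {h : ℝ} (hh : 0 < h) (hT : h ≤ T) (z : E n d) :
    ‖Tinv α h (A z)‖ ≤ (n * (CA * (1 + T) ^ (n : ℝ))) * h⁻¹ * ‖Tinv α h z‖ := by
  have hCA0 : 0 ≤ CA := (norm_nonneg _).trans hCA
  have hT0 : 0 < 1 + T := by linarith
  refine Tinv_norm_le hh (by positivity) fun i => ?_
  have hz : A z i = ∑ j, A (Pi.single j (z j)) i := by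
    conv_lhs => rw [← Finset.univ_sum_single z]
    rw [map_sum, Finset.sum_apply]
  set ei : ℝ := (1 : ℝ) / α + ((i : ℕ) : ℝ) with hei
  have hterm : ∀ j, (h ^ ei)⁻¹ * ‖A (Pi.single j (z j)) i‖
      ≤ CA * (1 + T) ^ (n : ℝ) * h⁻¹ * ‖Tinv α h z‖ := by
    intro j
    by_cases hij : (j : ℕ) + 1 < (i : ℕ)
    · rw [hblock i j _ hij, norm_zero, mul_zero]; positivity
    · have hij' : ((i : ℕ) : ℝ) ≤ (j : ℕ) + 1 := by exact_mod_cast not_lt.1 hij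
      have hjn : ((j : ℕ) : ℝ) + 1 ≤ n := by exact_mod_cast j.2
      have hi0 : (0 : ℝ) ≤ (i : ℕ) := Nat.cast_nonneg _
      have h1 : ‖A (Pi.single j (z j)) i‖ ≤ CA * ‖z j‖ := by
        refine (norm_le_pi_norm _ i).trans ((A.le_of_opNorm_le hCA _).trans ?_)
        rw [Pi.norm_single]
      have h2 := block_norm_le (α := α) hh z j
      have h3 : (h ^ ei)⁻¹ * h ^ ((1 : ℝ) / α + ((j : ℕ) : ℝ)) ≤ (1 + T) ^ (n : ℝ) * h⁻¹ := by
        rw [← Real.rpow_neg hh.le, ← Real.rpow_add hh, ← Real.rpow_neg_one h]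
        refine rpow_le_const_mul_rpow hh hT ?_ ?_ <;> rw [hei] <;> linarith
      calc (h ^ ei)⁻¹ * ‖A (Pi.single j (z j)) i‖
          ≤ (h ^ ei)⁻¹ * (CA * (h ^ ((1 : ℝ) / α + ((j : ℕ) : ℝ)) * ‖Tinv α h z‖)) := by
            gcongr; exact h1.trans (by gcongr)
        _ = CA * ((h ^ ei)⁻¹ * h ^ ((1 : ℝ) / α + ((j : ℕ) : ℝ))) * ‖Tinv α h z‖ := by ring
        _ ≤ CA * ((1 + T) ^ (n : ℝ) * h⁻¹) * ‖Tinv α h z‖ := by gcongr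
        _ = _ := by ring
  calc (h ^ ei)⁻¹ * ‖A z i‖ ≤ (h ^ ei)⁻¹ * ∑ j, ‖A (Pi.single j (z j)) i‖ := by
        rw [hz]; gcongr; exact norm_sum_le _ _
    _ = ∑ j, (h ^ ei)⁻¹ * ‖A (Pi.single j (z j)) i‖ := Finset.mul_sum _ _ _
    _ ≤ ∑ _j : Fin n, CA * (1 + T) ^ (n : ℝ) * h⁻¹ * ‖Tinv α h z‖ :=
        Finset.sum_le_sum fun j _ => hterm j
    _ = _ := by simp; ring

/-- Moving from `x` to `y` one block at a time. -/
lemma telescope {W : Type*} [SeminormedAddCommGroup W] (f : E n d → W) (ω : Fin n → ℝ → ℝ)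
    (hf : ∀ j x x', (∀ k, k ≠ j → x k = x' k) → ‖f x - f x'‖ ≤ ω j ‖x j - x' j‖)
    (x y : E n d) : ‖f x - f y‖ ≤ ∑ j, ω j ‖x j - y j‖ := by
  have key : ∀ S : Finset (Fin n), ‖f (S.piecewise x y) - f y‖ ≤ ∑ j ∈ S, ω j ‖x j - y j‖ := by
    intro S
    induction S using Finset.induction_on with
    | empty => simp
    | insert j S hj ih =>
      rw [Finset.sum_insert hj]
      have h1 := hf j ((insert j S).piecewise x y) (S.piecewise x y) (fun k hk => by
        simp [Finset.piecewise, hk])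
      have h2 : (insert j S).piecewise x y j - S.piecewise x y j = x j - y j := by
        simp [Finset.piecewise, hj]
      rw [h2] at h1
      have h3 := norm_add_le (f ((insert j S).piecewise x y) - f (S.piecewise x y))
        (f (S.piecewise x y) - f y)
      rw [sub_add_sub_cancel] at h3
      linarith
  simpa using key Finset.univ

lemma rpow_le_one_add {N γ : ℝ} (hN : 0 ≤ N) (h0 : 0 ≤ γ) (h1 : γ ≤ 1) : N ^ γ ≤ 1 + N :=
  calc N ^ γ ≤ (1 + N) ^ γ := Real.rpow_le_rpow hN (by linarith) h0
    _ ≤ (1 + N) ^ (1 : ℝ) := Real.rpow_le_rpow_of_exponent_le (by linarith) h1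
    _ = 1 + N := Real.rpow_one _

section Hyp

variable [NeZero n] {α T K : ℝ} {A : ℝ → E n d →L[ℝ] E n d} {F : ℝ → E n d → E n d}
  {β : Fin n → ℝ}

/-- The Hölder exponent of `x_j ↦ F_i(t,x)`: it is `β 0` on the first line of the system and
`β j` on the others. -/
def hexp (β : Fin n → ℝ) (i j : Fin n) : ℝ := if i = 0 then β 0 else β j

lemma ChainHyp.hexp_mem (hc : ChainHyp n d α T K A F β) {i j : Fin n} (hij : i ≤ j) :
    0 ≤ hexp β i j ∧ hexp β i j ≤ 1 := by
  unfold hexp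
  split_ifs with h
  · exact ⟨hc.hβ0.1.le, hc.hβ0.2⟩
  · have hi : 1 ≤ (i : ℕ) := Nat.one_le_iff_ne_zero.2 fun h0 => h (Fin.ext (by simpa using h0))
    have hj : 1 ≤ (j : ℕ) := hi.trans hij
    have hj' : (1 : ℝ) ≤ (j : ℕ) := by exact_mod_cast hj
    have := hc.hβ j hj
    have hα := hc.hα₁
    refine ⟨le_trans ?_ this.1.le, this.2⟩
    have : 0 ≤ α * (((j : ℕ) : ℝ) - 1) := mul_nonneg (by linarith) (by linarith)
    positivity

/-- The thresholds on `β` make every Hölder modulus, once rescaled and integrated over a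
time interval of length `h`, a positive power of `h`. -/
lemma ChainHyp.exponent_pos (hc : ChainHyp n d α T K A F β) {i j : Fin n} (hij : i ≤ j) :
    0 < 1 - (1 / α + ((i : ℕ) : ℝ)) + hexp β i j * (1 / α + ((j : ℕ) : ℝ)) := by
  have hα := hc.hα₁
  have hα0 : 0 < α := by linarith
  have hinv : 1 / α < 1 := by rw [div_lt_one hα0]; exact hα
  have hinv0 : 0 < 1 / α := by positivity
  have hj0 : (0 : ℝ) ≤ (j : ℕ) := Nat.cast_nonneg _
  unfold hexp
  split_ifs with h
  · subst h
    have : 0 < β 0 * (1 / α + ((j : ℕ) : ℝ)) := mul_pos hc.hβ0.1 (by linarith)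
    simp only [Fin.val_zero, Nat.cast_zero]
    linarith
  · have hi : 1 ≤ (i : ℕ) := Nat.one_le_iff_ne_zero.2 fun h0 => h (Fin.ext (by simpa using h0))
    have hj : 1 ≤ (j : ℕ) := hi.trans hij
    have hij' : ((i : ℕ) : ℝ) ≤ (j : ℕ) := by exact_mod_cast hij
    have h1 := (hc.hβ j hj).1
    rw [div_lt_iff₀ (by positivity)] at h1
    have h2 : (1 + α * (((j : ℕ) : ℝ) - 1)) / α < β j * (1 + α * ((j : ℕ) : ℝ)) / α := by
      gcongr
    have h3 : (1 + α * (((j : ℕ) : ℝ) - 1)) / α = 1 / α + ((j : ℕ) : ℝ) - 1 := by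
      field_simp
      ring
    have h4 : β j * (1 + α * ((j : ℕ) : ℝ)) / α = β j * (1 / α + ((j : ℕ) : ℝ)) := by
      field_simp
    linarith

lemma ChainHyp.exists_zeta (hc : ChainHyp n d α T K A F β) :
    ∃ ζ : ℝ, 0 < ζ ∧ ζ < 1 / 2 ∧ ∀ i j : Fin n, i ≤ j →
      ζ < 1 - (1 / α + ((i : ℕ) : ℝ)) + hexp β i j * (1 / α + ((j : ℕ) : ℝ)) := by
  have h0 : ∀ᶠ ζ in nhdsWithin (0 : ℝ) (Ioi 0), 0 < ζ := eventually_mem_nhdsWithin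
  have hlt : ∀ c : ℝ, 0 < c → ∀ᶠ ζ in nhdsWithin (0 : ℝ) (Ioi 0), ζ < c := fun c hcpos =>
    nhdsWithin_le_nhds (Iio_mem_nhds hcpos)
  have hall : ∀ᶠ ζ in nhdsWithin (0 : ℝ) (Ioi 0), ∀ i j : Fin n, i ≤ j →
      ζ < 1 - (1 / α + ((i : ℕ) : ℝ)) + hexp β i j * (1 / α + ((j : ℕ) : ℝ)) := by
    refine Filter.eventually_all.2 fun i => Filter.eventually_all.2 fun j => ?_
    by_cases hij : i ≤ j
    · filter_upwards [hlt _ (hc.exponent_pos hij)] with ζ h _ using h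
    · exact Filter.Eventually.of_forall fun ζ h => absurd h hij
  obtain ⟨ζ, h1, h2, h3⟩ := (h0.and ((hlt (1 / 2) (by norm_num)).and hall)).exists
  exact ⟨ζ, h1, h2, h3⟩

/-- All the regularity of `F` in one bound; blocks `j < i` do not contribute because `F_i`
does not depend on them. -/
lemma ChainHyp.exists_holder (hc : ChainHyp n d α T K A F β) :
    ∃ CH : ℝ, 0 ≤ CH ∧ ∀ (i : Fin n) (t : ℝ) (x y : E n d),
      ‖F t x i - F t y i‖ ≤ ∑ j, if i ≤ j then CH * ‖x j - y j‖ ^ hexp β i j else 0 := by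
  obtain ⟨CH, hCH, H0, H1⟩ := hc.hHolder
  refine ⟨CH, hCH.le, fun i t x y => ?_⟩
  refine telescope (fun x => F t x i)
    (fun j r => if i ≤ j then CH * r ^ hexp β i j else 0) ?_ x y
  intro j x x' hxx
  by_cases hij : i ≤ j
  · simp only [hij, if_true]
    by_cases h : i = 0
    · subst h
      simpa [hexp] using H0 j t x x' hxx
    · have hi : 1 ≤ (i : ℕ) := Nat.one_le_iff_ne_zero.2 fun h0 => h (Fin.ext (by simpa using h0))
      simpa [hexp, h] using H1 i j hi hij t x x' hxx
  · have : F t x i = F t x' i := hc.hFdep i t x x' fun k hk => hxx k fun hkj => hij (hkj ▸ hk)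
    simp [hij, this]

lemma ChainHyp.exists_growth (hc : ChainHyp n d α T K A F β) :
    ∃ k : ℝ, 0 ≤ k ∧ ∀ (u : ℝ) (x : E n d), ‖F u x‖ ≤ k * (1 + ‖x‖) := by
  obtain ⟨CH, hCH, H⟩ := hc.exists_holder
  have hK : 0 ≤ K := by linarith [hc.hK]
  refine ⟨K + n * CH, by positivity, fun u x => ?_⟩
  refine (pi_norm_le_iff_of_nonneg (by positivity)).2 fun i => ?_
  have h1 := H i u x 0
  have h2 : (∑ j, if i ≤ j then CH * ‖x j - (0 : E n d) j‖ ^ hexp β i j else 0)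
      ≤ ∑ _j : Fin n, CH * (1 + ‖x‖) := by
    refine Finset.sum_le_sum fun j _ => ?_
    split_ifs with hij
    · gcongr
      rw [Pi.zero_apply, sub_zero]
      exact (rpow_le_one_add (norm_nonneg _) (hc.hexp_mem hij).1 (hc.hexp_mem hij).2).trans
        (by gcongr; exact norm_le_pi_norm x j)
    · positivity
  have h3 : (∑ _j : Fin n, CH * (1 + ‖x‖)) = n * CH * (1 + ‖x‖) := by simp; ring
  have h4 := norm_add_le (F u x i - F u 0 i) (F u 0 i)
  rw [sub_add_cancel] at h4
  have h5 := hc.hF0 u i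
  nlinarith [norm_nonneg x, mul_nonneg hK (norm_nonneg x)]

/-- In the intrinsic scale, `F` has increments of size `h^(ζ-1)`, up to an affine factor in the
scaled distance. -/
lemma ChainHyp.exists_scaled (hc : ChainHyp n d α T K A F β) {ζ : ℝ} (hζ0 : 0 < ζ)
    (hζ : ∀ i j : Fin n, i ≤ j →
      ζ < 1 - (1 / α + ((i : ℕ) : ℝ)) + hexp β i j * (1 / α + ((j : ℕ) : ℝ))) :
    ∃ CF : ℝ, 0 ≤ CF ∧ ∀ h : ℝ, 0 < h → h ≤ T → ∀ (u : ℝ) (x y : E n d),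
      ‖Tinv α h (F u x - F u y)‖ ≤ CF * h ^ (ζ - 1) * (1 + ‖Tinv α h (x - y)‖) := by
  obtain ⟨CH, hCH, H⟩ := hc.exists_holder
  have hT := hc.hT
  have hα0 : 0 < α := by linarith [hc.hα₁]
  refine ⟨n * (CH * (1 + T) ^ ((n : ℝ) + 1)), by positivity, fun h hh hhT u x y => ?_⟩
  refine Tinv_norm_le hh (by positivity) fun i => ?_
  set N := ‖Tinv α h (x - y)‖ with hN
  have hN0 : 0 ≤ N := norm_nonneg _
  set ei : ℝ := (1 : ℝ) / α + ((i : ℕ) : ℝ) with hei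
  have hterm : ∀ j, (h ^ ei)⁻¹ * (if i ≤ j then CH * ‖x j - y j‖ ^ hexp β i j else 0)
      ≤ CH * (1 + T) ^ ((n : ℝ) + 1) * h ^ (ζ - 1) * (1 + N) := by
    intro j
    split_ifs with hij
    · obtain ⟨hγ0, hγ1⟩ := hc.hexp_mem hij
      set γ := hexp β i j with hγ
      set ej : ℝ := (1 : ℝ) / α + ((j : ℕ) : ℝ) with hej
      have hej0 : 0 ≤ ej := by positivity
      have hjn : ((j : ℕ) : ℝ) ≤ n := by exact_mod_cast j.2.le
      have hi0 : (0 : ℝ) ≤ (i : ℕ) := Nat.cast_nonneg _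
      have h1 : ‖x j - y j‖ ^ γ ≤ h ^ (ej * γ) * (1 + N) := by
        calc ‖x j - y j‖ ^ γ ≤ (h ^ ej * N) ^ γ :=
              Real.rpow_le_rpow (norm_nonneg _) (block_norm_le hh (x - y) j) hγ0
          _ = h ^ (ej * γ) * N ^ γ := by
              rw [Real.mul_rpow (by positivity) hN0, ← Real.rpow_mul hh.le]
          _ ≤ h ^ (ej * γ) * (1 + N) := by
              gcongr; exact rpow_le_one_add hN0 hγ0 hγ1
      have h2 : (h ^ ei)⁻¹ * h ^ (ej * γ) ≤ (1 + T) ^ ((n : ℝ) + 1) * h ^ (ζ - 1) := by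
        rw [← Real.rpow_neg hh.le, ← Real.rpow_add hh]
        have h3 := hζ i j hij
        refine rpow_le_const_mul_rpow hh hhT ?_ ?_
        · linarith
        · have : ej * γ ≤ ej := mul_le_of_le_one_right hej0 hγ1
          linarith
      calc (h ^ ei)⁻¹ * (CH * ‖x j - y j‖ ^ γ)
          ≤ (h ^ ei)⁻¹ * (CH * (h ^ (ej * γ) * (1 + N))) := by gcongr
        _ = CH * ((h ^ ei)⁻¹ * h ^ (ej * γ)) * (1 + N) := by ring
        _ ≤ CH * ((1 + T) ^ ((n : ℝ) + 1) * h ^ (ζ - 1)) * (1 + N) := by gcongr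
        _ = _ := by ring
    · rw [mul_zero]; positivity
  calc (h ^ ei)⁻¹ * ‖(F u x - F u y) i‖
      ≤ (h ^ ei)⁻¹ * ∑ j, (if i ≤ j then CH * ‖x j - y j‖ ^ hexp β i j else 0) := by
        gcongr; exact H i u x y
    _ = ∑ j, (h ^ ei)⁻¹ * (if i ≤ j then CH * ‖x j - y j‖ ^ hexp β i j else 0) :=
        Finset.mul_sum _ _ _
    _ ≤ ∑ _j : Fin n, CH * (1 + T) ^ ((n : ℝ) + 1) * h ^ (ζ - 1) * (1 + N) :=
        Finset.sum_le_sum fun j _ => hterm j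
    _ = _ := by simp; ring

end Hyp

end Chain

/-- Corollary `control_error_flow`.  Let `θ` be a flow for `(A,F)`, `R` the
resolvent of `A` and `m̃` the associated frozen shift.  Then there exist `C = C(T) > 0` and
`ζ ∈ (0,1)` such that for all `0 ≤ t < s ≤ T` and all `x, y`:
`|𝕋_{s−t}⁻¹(θ_{s,t}(x) − m̃^{s,y}_{s,t}(x))| ≤ C (s−t)^{min(1/α, ζ)} (1 + |𝕋_{s−t}⁻¹(θ_{s,t}(x) − y)|)`. -/
theorem stmt3 {n : ℕ} [NeZero n] {d : Fin n → ℕ} {α T K : ℝ}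
    {A : ℝ → E n d →L[ℝ] E n d} {F : ℝ → E n d → E n d} {β : Fin n → ℝ}
    (hc : ChainHyp n d α T K A F β)
    (θ : ℝ → ℝ → E n d → E n d) (hθ : IsFlow T A F θ)
    (R : ℝ → ℝ → E n d →L[ℝ] E n d) (hR : IsResolvent T A R) :
    ∃ C : ℝ, 0 < C ∧ ∃ ζ : ℝ, ζ ∈ Set.Ioo (0 : ℝ) 1 ∧
      ∀ t s : ℝ, 0 ≤ t → t < s → s ≤ T → ∀ x y : E n d,
        ‖Tinv α (s - t) (θ s t x - shiftm F θ R s y s t x)‖ ≤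
          C * (s - t) ^ (min (1 / α) ζ) * (1 + ‖Tinv α (s - t) (θ s t x - y)‖) := by
  obtain ⟨ζ, hζ0, hζ1, hζ⟩ := hc.exists_zeta
  obtain ⟨CF, hCF, HF⟩ := hc.exists_scaled hζ0 hζ
  obtain ⟨k, hk, Hk⟩ := hc.exists_growth
  obtain ⟨CA, hCA⟩ := hc.hAbdd
  have hCA0 : 0 ≤ CA := (norm_nonneg _).trans (hCA 0)
  have hT := hc.hT
  have hα1 := hc.hα₁
  have hα2 := hc.hα₂
  have hmin : min (1 / α) ζ = ζ := by
    refine min_eq_right ?_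
    have : 1 / 2 ≤ 1 / α := one_div_le_one_div_of_le (by linarith) hα2.le
    linarith
  set CS : ℝ := n * (CA * (1 + T) ^ (n : ℝ)) with hCS
  have hCS0 : 0 ≤ CS := by positivity
  -- `C₁` is the Lipschitz-type constant comparing the two flows at all intermediate times
  set C₁ : ℝ := (1 + CF * (1 + T)) * exp (CS + CF * (1 + T)) with hC₁
  have hC₁0 : 0 ≤ C₁ := by positivity
  refine ⟨CF * (1 + C₁) * exp CS + 1, by positivity, ζ, ⟨hζ0, by linarith⟩, ?_⟩
  intro t s ht0 hts hsT x y
  rw [hmin]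
  set h : ℝ := s - t with hh
  have hh0 : 0 < h := sub_pos.2 hts
  have hhT : h ≤ T := by linarith
  have htI : t ∈ Icc 0 T := ⟨ht0, hts.le.trans hsT⟩
  have hsI : s ∈ Icc 0 T := ⟨ht0.trans hts.le, hsT⟩
  have hI : ∀ v ∈ Icc t s, v ∈ Icc 0 T := fun v hv => ⟨ht0.trans hv.1, hv.2.trans hsT⟩
  have hhζ : h ^ (ζ - 1) * h = h ^ ζ := by
    rw [Real.rpow_sub_one hh0.ne', div_mul_cancel₀ _ hh0.ne']
  have hhζT : h ^ ζ ≤ 1 + T := by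
    have := rpow_le_const_mul_rpow (p := ζ) (a := 0) (m := 1) hh0 hhT hζ0.le (by linarith)
    simpa using this
  have hhζ0 : 0 < h ^ (ζ - 1) := by positivity
  -- integrability and boundedness along the flow
  have hHm : Measurable fun p : ℝ × E n d => A p.1 p.2 + F p.1 p.2 :=
    (measurable_apply_of_measurable hc.hAmeas).add hc.hFmeas
  have hHlin : ∀ u (z : E n d), ‖A u z + F u z‖ ≤ (CA + k) * (1 + ‖z‖) := fun u z => by
    have h1 := norm_add_le (A u z) (F u z)
    have h2 := (A u).le_of_opNorm_le (hCA u) z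
    have h3 := Hk u z
    nlinarith [norm_nonneg z]
  have hflow : ∀ r ∈ Icc 0 T, ∀ z, ∀ v ∈ Icc 0 T,
      θ v r z = z + ∫ u in r..v, (A u (θ u r z) + F u (θ u r z)) := fun r hr z v hv => by
    rw [hθ.2 v r hv hr z, intervalIntegral.integral_symm, sub_neg_eq_add]
  have hflowi : ∀ r ∈ Icc 0 T, ∀ z,
      IntervalIntegrable (fun u => A u (θ u r z) + F u (θ u r z)) volume 0 T := fun r hr z =>
    integrable_two_sided hr (by positivity) (H := fun u z => A u z + F u z)
      (φ := fun u => θ u r z) hHm hHlin (hflow r hr z)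
  have hX := hflowi t htI x
  have hY := hflowi s hsI y
  obtain ⟨M, hM⟩ : ∃ M, ∀ u ∈ Icc 0 T, ‖θ u s y‖ ≤ M :=
    ⟨_, gronwall_two_sided (P := CA + k) (k := CA + k) (by positivity) (by positivity) hsI hY
      (hflow s hsI y) (fun u _ => (hHlin u _).trans (by linarith))⟩
  -- comparison of the forward flow from `x` with the backward flow from `y`
  set N : ℝ := ‖Tinv α h (θ s t x - y)‖ with hN
  have hN0 : 0 ≤ N := norm_nonneg _
  have hD : ∀ v ∈ Icc t s, ‖Tinv α h (θ v t x - θ v s y)‖ ≤ C₁ * (1 + N) := by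
    intro v hv
    have key := gronwall_backward (a := t) (b := s) (P := CF * h ^ (ζ - 1))
      (k := CS * h⁻¹ + CF * h ^ (ζ - 1)) (by positivity) (by positivity)
      (Y := fun v => TinvL d α h (θ v t x - θ v s y))
      (Y₀ := TinvL d α h (θ s t x - y))
      (B := fun u => TinvL d α h ((A u (θ u t x) + F u (θ u t x))
        - (A u (θ u s y) + F u (θ u s y)))) ?_ ?_ ?_ v hv
    · rw [TinvL_apply, TinvL_apply, ← hN] at key
      refine key.trans ?_
      have e1 : CF * h ^ (ζ - 1) * (s - t) = CF * h ^ ζ := by rw [mul_assoc, hhζ]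
      have e2 : (CS * h⁻¹ + CF * h ^ (ζ - 1)) * (s - t) = CS + CF * h ^ ζ := by
        rw [add_mul, e1, ← hh, mul_assoc, inv_mul_cancel₀ hh0.ne', mul_one]
      rw [e1, e2]
      have e3 : CF * h ^ ζ ≤ CF * (1 + T) := by gcongr
      have e4 : 0 ≤ CF * (1 + T) := by positivity
      calc (N + CF * h ^ ζ) * exp (CS + CF * h ^ ζ)
          ≤ ((1 + CF * (1 + T)) * (1 + N)) * exp (CS + CF * (1 + T)) := by
            gcongr
            nlinarith
        _ = C₁ * (1 + N) := by rw [hC₁]; ring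
    · have hXY := (hX.sub hY).sub_Icc htI hsI
      exact ⟨(TinvL d α h).integrable_comp hXY.1, (TinvL d α h).integrable_comp hXY.2⟩
    · intro w hw
      have hwI := hI w hw
      rw [ContinuousLinearMap.intervalIntegral_comp_comm _ ((hX.sub hY).sub_Icc hsI hwI),
        ← map_add, intervalIntegral.integral_sub (hX.sub_Icc hsI hwI) (hY.sub_Icc hsI hwI),
        hflow t htI x w hwI, hflow s hsI y w hwI, hflow t htI x s hsI,
        ← intervalIntegral.integral_add_adjacent_intervals (hX.sub_Icc htI hsI)
          (hX.sub_Icc hsI hwI)]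
      congr 1
      abel
    · intro u _
      have e : (A u (θ u t x) + F u (θ u t x)) - (A u (θ u s y) + F u (θ u s y))
          = A u (θ u t x - θ u s y) + (F u (θ u t x) - F u (θ u s y)) := by
        rw [map_sub]; abel
      simp only [e]
      rw [map_add]
      simp only [TinvL_apply]
      refine (norm_add_le _ _).trans ?_
      have b1 := scaled_linear (α := α) (hCA u) (hc.hAblock u) hh0 hhT (θ u t x - θ u s y)
      have b2 := HF h hh0 hhT u (θ u t x) (θ u s y)
      rw [← hCS] at b1
      linarith
  -- the frozen shift solves the linear equation with source `f`
  set f : ℝ → E n d := fun u => F u (θ u s y) with hf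
  have hθm : Measurable fun u => θ u s y :=
    hθ.1.comp (measurable_id.prodMk (measurable_const (a := (s, y))))
  have hfm : Measurable f := hc.hFmeas.comp (measurable_id.prodMk hθm)
  have hfb : ∀ u ∈ Icc t s, ‖f u‖ ≤ k * (1 + M) := fun u hu =>
    (Hk u _).trans (by gcongr; exact hM u (hI u hu))
  have hfi : IntervalIntegrable f volume t s := by
    rw [intervalIntegrable_iff_integrableOn_Ioc_of_le hts.le]
    refine IntegrableOn.of_bound (by simp) hfm.aestronglyMeasurable (k * (1 + M)) ?_
    filter_upwards [ae_restrict_mem measurableSet_Ioc] with u hu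
    exact hfb u ⟨hu.1.le, hu.2⟩
  obtain ⟨hzi, hz⟩ := variation_of_constants hc.hAmeas hCA hR ht0 hts.le hsT hfm hfb
  have hRi := (resolvent_integrable hc.hAmeas hCA hR htI x).sub_Icc htI hsI
  have hXi := hX.sub_Icc htI hsI
  set m : ℝ → E n d := fun v => R v t x + ∫ u in t..v, R v u (f u) with hm
  have hBi : IntervalIntegrable
      (fun u => A u (θ u t x - m u) + (F u (θ u t x) - f u)) volume t s := by
    refine (((hXi.sub hRi).sub hzi).sub hfi).congr fun u _ => ?_
    simp only [hm, map_sub, map_add]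
    abel
  have key := gronwall_forward (a := t) (b := s) (P := CF * h ^ (ζ - 1) * (1 + C₁ * (1 + N)))
    (k := CS * h⁻¹) (by positivity) (by positivity)
    (Y := fun v => TinvL d α h (θ v t x - m v)) (Y₀ := 0)
    (B := fun u => TinvL d α h (A u (θ u t x - m u) + (F u (θ u t x) - f u))) ?_ ?_ ?_ s
    ⟨hts.le, le_rfl⟩
  · have e1 : CF * h ^ (ζ - 1) * (1 + C₁ * (1 + N)) * (s - t)
        = CF * h ^ ζ * (1 + C₁ * (1 + N)) := by rw [← hhζ, ← hh]; ring
    have e2 : CS * h⁻¹ * (s - t) = CS := by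
      rw [← hh, mul_assoc, inv_mul_cancel₀ hh0.ne', mul_one]
    rw [norm_zero, zero_add, e1, e2, TinvL_apply] at key
    refine key.trans ?_
    have e3 : 0 < h ^ ζ := by positivity
    calc CF * h ^ ζ * (1 + C₁ * (1 + N)) * exp CS
        ≤ CF * h ^ ζ * ((1 + C₁) * (1 + N)) * exp CS := by
          gcongr
          nlinarith
      _ = CF * (1 + C₁) * exp CS * h ^ ζ * (1 + N) := by ring
      _ ≤ (CF * (1 + C₁) * exp CS + 1) * h ^ ζ * (1 + N) := by
          gcongr
          linarith
  · exact ⟨(TinvL d α h).integrable_comp hBi.1, (TinvL d α h).integrable_comp hBi.2⟩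
  · intro v hv
    have hvI := hI v hv
    have hsub : uIcc t v ⊆ uIcc t s := by
      rw [uIcc_of_le hv.1, uIcc_of_le hts.le]; exact Icc_subset_Icc_right hv.2
    rw [ContinuousLinearMap.intervalIntegral_comp_comm _ (hBi.mono_set hsub), zero_add]
    congr 1
    have e : ∫ u in t..v, (A u (θ u t x - m u) + (F u (θ u t x) - f u))
        = ∫ u in t..v, ((((A u (θ u t x) + F u (θ u t x)) - A u (R u t x))
          - A u (∫ r in t..u, R u r (f r))) - f u) := by
      refine intervalIntegral.integral_congr fun u _ => ?_
      simp only [hm, map_sub, map_add]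
      abel
    have hXv := hXi.mono_set hsub
    have hRv := hRi.mono_set hsub
    have hzv := hzi.mono_set hsub
    have hfv := hfi.mono_set hsub
    rw [e, intervalIntegral.integral_sub ((hXv.sub hRv).sub hzv) hfv,
      intervalIntegral.integral_sub (hXv.sub hRv) hzv, intervalIntegral.integral_sub hXv hRv]
    simp only [hm]
    rw [hz v hv, hflow t htI x v hvI, hR v t hvI htI x]
    abel
  · intro u hu
    rw [map_add]
    simp only [TinvL_apply]
    refine (norm_add_le _ _).trans ?_
    have b1 := scaled_linear (α := α) (hCA u) (hc.hAblock u) hh0 hhT (θ u t x - m u)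
    have b2 := HF h hh0 hhT u (θ u t x) (θ u s y)
    have b3 := hD u hu
    rw [← hCS] at b1
    have b4 : CF * h ^ (ζ - 1) * (1 + ‖Tinv α h (θ u t x - θ u s y)‖)
        ≤ CF * h ^ (ζ - 1) * (1 + C₁ * (1 + N)) := by gcongr
    linarith

end
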